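/- arXiv:1906.03743 — 4 statements merged into one kernel-verified Lean document; each statement's English description precedes it below -/
import Mathlib

section
/- Let n be a positive integer and f : {-1,1}^n → ℝ take values in the interval [-1,1]. For every nonzero ε with |ε| ≤ 1/√n, we have |(1/ε)·(E_ε[f] − E_0[f]) − ∑_{i=1}^n f̂({i})| ≤ |ε| · n. -/
open Finset

/-- The real sign `±1` associated to a Boolean, encoding `{-1,1}`. -/
noncomputable def sgn (b : Bool) : ℝ := if b then 1 else -1

/-- Fourier coefficient `f̂(S) = 2^{-n} ∑_x f(x) ∏_{i∈S} x_i` of `f : {-1,1}^n → ℝ`. -/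
noncomputable def walshCoeff {n : ℕ} (f : (Fin n → Bool) → ℝ) (S : Finset (Fin n)) : ℝ :=
  (2 ^ n : ℝ)⁻¹ * ∑ x : Fin n → Bool, f x * ∏ i ∈ S, sgn (x i)

/-- Expectation of `f` under `ε`-biased coins:
`E_ε[f] = ∑_x f(x) ∏_i (1 + ε·x_i)/2`. -/
noncomputable def biasedExp {n : ℕ} (f : (Fin n → Bool) → ℝ) (ε : ℝ) : ℝ :=
  ∑ x : Fin n → Bool, f x * ∏ i : Fin n, (1 + ε * sgn (x i)) / 2

noncomputable def uE {n : ℕ} (g : (Fin n → Bool) → ℝ) : ℝ :=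
  (2 ^ n : ℝ)⁻¹ * ∑ x : Fin n → Bool, g x

lemma uE_prod {n : ℕ} (h : Fin n → Bool → ℝ) :
    uE (fun x => ∏ i, h i (x i)) = ∏ i, (h i true + h i false) / 2 := by
  have h1 := (Finset.prod_univ_sum (fun _ : Fin n => (Finset.univ : Finset Bool)) h).symm
  rw [Fintype.piFinset_univ] at h1
  unfold uE
  rw [h1, Finset.prod_div_distrib]
  simp [div_eq_inv_mul]

lemma uE_add {n : ℕ} (g h : (Fin n → Bool) → ℝ) :
    uE (fun x => g x + h x) = uE g + uE h := by
  simp [uE, Finset.sum_add_distrib, mul_add]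

lemma uE_mul {n : ℕ} (c : ℝ) (h : (Fin n → Bool) → ℝ) :
    uE (fun x => c * h x) = c * uE h := by
  simp only [uE, ← Finset.mul_sum]; ring

lemma uE_sum {n : ℕ} {ι : Type} (s : Finset ι) (h : ι → (Fin n → Bool) → ℝ) :
    uE (fun x => ∑ i ∈ s, h i x) = ∑ i ∈ s, uE (h i) := by
  simp only [uE, ← Finset.mul_sum]; rw [Finset.sum_comm]

lemma uE_PP {n : ℕ} (ε : ℝ) :
    uE (fun x : Fin n → Bool => (∏ i, (1 + ε * sgn (x i))) ^ 2) = (1 + ε ^ 2) ^ n := by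
  simp only [← Finset.prod_pow]
  rw [uE_prod (fun _ b => (1 + ε * sgn b) ^ 2)]
  simp only [sgn, Finset.prod_const, Finset.card_univ, Fintype.card_fin]
  congr 1
  simp; ring

lemma uE_P {n : ℕ} (ε : ℝ) :
    uE (fun x : Fin n → Bool => ∏ i, (1 + ε * sgn (x i))) = 1 := by
  rw [uE_prod (fun _ b => (1 + ε * sgn b))]
  apply Finset.prod_eq_one
  intro i _
  simp [sgn]
  ring

lemma uE_Px {n : ℕ} (ε : ℝ) (j : Fin n) :
    uE (fun x : Fin n → Bool => (∏ i, (1 + ε * sgn (x i))) * sgn (x j)) = ε := by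
  have : (fun x : Fin n → Bool => (∏ i, (1 + ε * sgn (x i))) * sgn (x j)) =
      fun x => ∏ i, ((1 + ε * sgn (x i)) * (if i = j then sgn (x i) else 1)) := by
    funext x
    rw [Finset.prod_mul_distrib]; simp
  rw [this, uE_prod (fun i b => ((1 + ε * sgn b) * (if i = j then sgn b else 1)))]
  rw [Finset.prod_eq_single j]
  · simp [sgn]
    ring
  · intro i _ hi
    simp [sgn, hi]
    ring
  · simp

lemma uE_xx {n : ℕ} (j k : Fin n) :
    uE (fun x : Fin n → Bool => sgn (x j) * sgn (x k)) = if j = k then 1 else 0 := by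
  have : (fun x : Fin n → Bool => sgn (x j) * sgn (x k)) =
      fun x => ∏ i, ((if i = j then sgn (x i) else 1) * (if i = k then sgn (x i) else 1)) := by
    funext x
    rw [Finset.prod_mul_distrib]; simp
  rw [this, uE_prod (fun i b => ((if i = j then sgn b else 1) * (if i = k then sgn b else 1)))]
  split_ifs with h
  · subst h
    apply Finset.prod_eq_one
    intro i _
    by_cases hi : i = j <;> simp [sgn, hi]
  · apply Finset.prod_eq_zero (Finset.mem_univ j)
    simp [sgn, h]

lemma uE_one {n : ℕ} : uE (fun _ : Fin n → Bool => (1 : ℝ)) = 1 := by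
  simp [uE]

lemma uE_x {n : ℕ} (j : Fin n) : uE (fun x : Fin n → Bool => sgn (x j)) = 0 := by
  have := uE_Px (n := n) 0 j
  simpa using this

lemma uE_gg {n : ℕ} (ε : ℝ) :
    uE (fun x : Fin n → Bool => ((∏ i, (1 + ε * sgn (x i))) - 1 - ε * ∑ i, sgn (x i)) ^ 2)
      = (1 + ε ^ 2) ^ n - 1 - n * ε ^ 2 := by
  have e : (fun x : Fin n → Bool =>
      ((∏ i, (1 + ε * sgn (x i))) - 1 - ε * ∑ i, sgn (x i)) ^ 2) =
      fun x => (∏ i, (1 + ε * sgn (x i))) ^ 2 + ((-2) * (∏ i, (1 + ε * sgn (x i))) + (1 +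
        ((-2 * ε) * (∑ j, (∏ i, (1 + ε * sgn (x i))) * sgn (x j)) +
        ((2 * ε) * (∑ j, sgn (x j)) + ε ^ 2 * ∑ j, ∑ k, sgn (x j) * sgn (x k))))) := by
    funext x
    rw [← Finset.mul_sum, ← Finset.sum_mul_sum]
    ring
  rw [e]
  simp only [uE_add, uE_mul, uE_sum, uE_PP, uE_P, uE_Px, uE_xx, uE_x, uE_one]
  simp
  ring

lemma uE_abs {n : ℕ} (f g : (Fin n → Bool) → ℝ) (hf : ∀ x, f x ∈ Set.Icc (-1 : ℝ) 1) :
    (uE (fun x => f x * g x)) ^ 2 ≤ uE (fun x => g x ^ 2) := by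
  have h1 := Finset.sum_mul_sq_le_sq_mul_sq Finset.univ f g
  have h2 : ∑ x, f x ^ 2 ≤ (2 : ℝ) ^ n := by
    calc ∑ x, f x ^ 2 ≤ ∑ _x : Fin n → Bool, (1 : ℝ) := by
          apply Finset.sum_le_sum
          intro x _
          have := hf x
          nlinarith [this.1, this.2]
      _ = 2 ^ n := by simp
  have h3 : 0 ≤ ∑ x, g x ^ 2 := Finset.sum_nonneg fun x _ => sq_nonneg _
  have hp : (0 : ℝ) < 2 ^ n := by positivity
  unfold uE
  rw [mul_pow]
  calc ((2 ^ n : ℝ)⁻¹) ^ 2 * (∑ x, f x * g x) ^ 2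
      ≤ ((2 ^ n : ℝ)⁻¹) ^ 2 * (2 ^ n * ∑ x, g x ^ 2) := by
        gcongr
        exact h1.trans (by gcongr)
    _ = _ := by field_simp

/-- if f takes values in [-1,1], then for nonzero |ε| ≤ 1/√n,
|(1/ε)(E_ε[f]−E_0[f]) − ∑_i f̂({i})| ≤ |ε|·n. -/
theorem coin_deriv_error_le_bounded (n : ℕ) (hn : 0 < n) (f : (Fin n → Bool) → ℝ)
    (hf : ∀ x, f x ∈ Set.Icc (-1 : ℝ) 1)
    (ε : ℝ) (hε0 : ε ≠ 0) (hε : |ε| ≤ 1 / Real.sqrt n) :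
    |(1 / ε) * (biasedExp f ε - biasedExp f 0) - ∑ i : Fin n, walshCoeff f {i}| ≤
      |ε| * n := by
  have hn' : (0 : ℝ) < n := by exact_mod_cast hn
  have ht : n * ε ^ 2 ≤ 1 := by
    have h1 : |ε| ^ 2 ≤ (1 / Real.sqrt n) ^ 2 := by gcongr
    rw [sq_abs, div_pow, Real.sq_sqrt hn'.le, le_div_iff₀ hn'] at h1
    linarith
  have hb : ∀ δ : ℝ, biasedExp f δ = uE (fun x => f x * ∏ i, (1 + δ * sgn (x i))) := by
    intro δ
    unfold biasedExp uE
    rw [Finset.mul_sum]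
    apply Finset.sum_congr rfl
    intro x _
    rw [Finset.prod_div_distrib]
    simp
    ring
  have hw : ∑ i : Fin n, walshCoeff f {i} = uE (fun x => f x * ∑ i, sgn (x i)) := by
    simp only [Finset.mul_sum, uE_sum]
    simp [walshCoeff, uE]
  set G : (Fin n → Bool) → ℝ :=
    fun x => (∏ i, (1 + ε * sgn (x i))) - 1 - ε * ∑ i, sgn (x i) with hG
  have key : ε * ((1 / ε) * (biasedExp f ε - biasedExp f 0) - ∑ i : Fin n, walshCoeff f {i})
      = uE (fun x => f x * G x) := by
    have e : (fun x => f x * G x) = fun x => f x * (∏ i, (1 + ε * sgn (x i))) +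
        ((-1) * (f x * (∏ i, (1 + 0 * sgn (x i)))) + (-ε) * (f x * ∑ i, sgn (x i))) := by
      funext x
      simp [hG]
      ring
    rw [e, uE_add, uE_add, uE_mul, uE_mul, ← hb, ← hb, ← hw]
    field_simp
    ring
  have h2 := uE_abs f G hf
  rw [← key, uE_gg] at h2
  have h3 : (1 + ε ^ 2) ^ n ≤ Real.exp (n * ε ^ 2) := by
    rw [Real.exp_nat_mul]
    gcongr
    linarith [Real.add_one_le_exp (ε ^ 2)]
  have h4 : |n * ε ^ 2| ≤ 1 := by rw [abs_of_nonneg (by positivity)]; exact ht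
  have h5 := (abs_le.mp (Real.abs_exp_sub_one_sub_id_le h4)).2
  have h6 := abs_le_of_sq_le_sq (h2.trans (by linarith) : _ ≤ (n * ε ^ 2) ^ 2) (by positivity)
  have h7 : |ε| * |(1 / ε) * (biasedExp f ε - biasedExp f 0) - ∑ i : Fin n, walshCoeff f {i}|
      ≤ |ε| * (|ε| * n) := by
    rw [← abs_mul]
    refine h6.trans (le_of_eq ?_)
    rw [← sq_abs ε]; ring
  exact le_of_mul_le_mul_left h7 (abs_pos.mpr hε0)
end

section
/- Let n be a positive integer and f : {-1,1}^n → [-1,1] be such that f̂({i}) ≥ 0 for every 1 ≤ i ≤ n. Then for every nonzero ε with |ε| ≤ 1/√n, the level-1 ℓ₁ norm of f satisfies L₁¹(f) = ∑_{i=1}^n |f̂({i})| ≤ |(1/ε)·(E_ε[f] − E_0[f])| + |ε| · n. -/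
open Finset

lemma sum_prod_bool {n : ℕ} (g : Fin n → Bool → ℝ) :
    ∑ x : Fin n → Bool, ∏ i, g i (x i) = ∏ i, (g i true + g i false) := by
  have h := Finset.prod_univ_sum (fun _ : Fin n => (Finset.univ : Finset Bool)) g
  simp only [Fintype.piFinset_univ, Fintype.sum_bool] at h
  exact h.symm

lemma sum_P {n : ℕ} (ε : ℝ) :
    ∑ x : Fin n → Bool, ∏ i, (1 + ε * sgn (x i)) = 2 ^ n := by
  rw [sum_prod_bool (fun _ b => 1 + ε * sgn b)]
  simp [sgn]
  congr 1; ring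

lemma sum_P_sq {n : ℕ} (ε : ℝ) :
    ∑ x : Fin n → Bool, (∏ i, (1 + ε * sgn (x i))) ^ 2 = 2 ^ n * (1 + ε ^ 2) ^ n := by
  simp_rw [← Finset.prod_pow]
  rw [sum_prod_bool (fun _ b => (1 + ε * sgn b) ^ 2)]
  simp only [sgn, Finset.prod_const, Finset.card_univ, Fintype.card_fin, ← mul_pow]
  congr 1
  simp
  ring

lemma sum_s_P {n : ℕ} (ε : ℝ) (j : Fin n) :
    ∑ x : Fin n → Bool, sgn (x j) * ∏ i, (1 + ε * sgn (x i)) = 2 ^ n * ε := by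
  have h : ∀ x : Fin n → Bool, sgn (x j) * ∏ i, (1 + ε * sgn (x i))
      = ∏ i, ((if i = j then sgn (x i) else 1) * (1 + ε * sgn (x i))) := by
    intro x
    rw [Finset.prod_mul_distrib]
    simp
  simp_rw [h]
  rw [sum_prod_bool (fun i b => (if i = j then sgn b else 1) * (1 + ε * sgn b))]
  have h2 : ∀ i : Fin n, ((if i = j then sgn true else 1) * (1 + ε * sgn true) +
      (if i = j then sgn false else 1) * (1 + ε * sgn false)) = 2 * (if i = j then ε else 1) := by
    intro i
    split_ifs <;> simp [sgn] <;> ring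
  simp_rw [h2]
  rw [Finset.prod_mul_distrib]
  simp

lemma sum_s_s {n : ℕ} (j k : Fin n) :
    ∑ x : Fin n → Bool, sgn (x j) * sgn (x k) = if j = k then 2 ^ n else 0 := by
  have h : ∀ x : Fin n → Bool, sgn (x j) * sgn (x k)
      = ∏ i, ((if i = j then sgn (x i) else 1) * (if i = k then sgn (x i) else 1)) := by
    intro x
    rw [Finset.prod_mul_distrib]
    simp
  split_ifs with hjk
  · subst hjk
    have : ∀ b, sgn b * sgn b = 1 := by intro b; cases b <;> simp [sgn]
    simp [this]
  · simp_rw [h]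
    rw [sum_prod_bool (fun i b => (if i = j then sgn b else 1) * (if i = k then sgn b else 1))]
    apply Finset.prod_eq_zero (Finset.mem_univ j)
    simp [hjk, sgn]

lemma sum_Q_sq {n : ℕ} (ε : ℝ) :
    ∑ x : Fin n → Bool, (∏ i, (1 + ε * sgn (x i)) - 1 - ε * ∑ i, sgn (x i)) ^ 2
      = 2 ^ n * ((1 + ε ^ 2) ^ n - 1 - n * ε ^ 2) := by
  have hLP : ∑ x : Fin n → Bool, (∑ j, sgn (x j)) * ∏ i, (1 + ε * sgn (x i))
      = n * (2 ^ n * ε) := by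
    simp_rw [Finset.sum_mul]
    rw [Finset.sum_comm]
    simp [sum_s_P]
  have hL : ∑ x : Fin n → Bool, (∑ j, sgn (x j)) = 0 := by
    rw [Finset.sum_comm]
    apply Finset.sum_eq_zero
    intro j _
    simpa using sum_s_P 0 j
  have hLL : ∑ x : Fin n → Bool, (∑ j, sgn (x j)) * (∑ j, sgn (x j)) = n * 2 ^ n := by
    simp_rw [Finset.sum_mul_sum]
    rw [Finset.sum_comm]
    simp_rw [Finset.sum_comm (s := (Finset.univ : Finset (Fin n → Bool))), sum_s_s]
    simp
  have h1 : ∑ x : Fin n → Bool, (1 : ℝ) = 2 ^ n := by simp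
  have hexp : ∀ x : Fin n → Bool,
      (∏ i, (1 + ε * sgn (x i)) - 1 - ε * ∑ i, sgn (x i)) ^ 2
      = (∏ i, (1 + ε * sgn (x i))) ^ 2 + 1 + ε ^ 2 * ((∑ j, sgn (x j)) * (∑ j, sgn (x j)))
        - 2 * (∏ i, (1 + ε * sgn (x i)))
        - 2 * ε * ((∑ j, sgn (x j)) * ∏ i, (1 + ε * sgn (x i)))
        + 2 * ε * (∑ j, sgn (x j)) := by
    intro x; ring
  simp_rw [hexp]
  simp only [Finset.sum_add_distrib, Finset.sum_sub_distrib, ← Finset.mul_sum]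
  rw [hLP, hL, hLL, h1, sum_P, sum_P_sq]
  ring

lemma key_num {n : ℕ} (ε : ℝ) (h : n * ε ^ 2 ≤ 1) :
    (1 + ε ^ 2) ^ n - 1 - n * ε ^ 2 ≤ (n * ε ^ 2) ^ 2 := by
  have h0 : 0 ≤ n * ε ^ 2 := by positivity
  have h1 : (1 + ε ^ 2) ^ n ≤ Real.exp (n * ε ^ 2) := by
    rw [Real.exp_nat_mul]
    apply pow_le_pow_left₀ (by positivity)
    linarith [Real.add_one_le_exp (ε ^ 2)]
  have h2 := Real.abs_exp_sub_one_sub_id_le (x := n * ε ^ 2) (by rwa [abs_of_nonneg h0])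
  linarith [le_abs_self (Real.exp (n * ε ^ 2) - 1 - n * ε ^ 2)]

lemma remainder_bound {n : ℕ} (f : (Fin n → Bool) → ℝ)
    (hf : ∀ x, f x ∈ Set.Icc (-1 : ℝ) 1) (ε : ℝ) (h : n * ε ^ 2 ≤ 1) :
    |∑ x, f x * (∏ i, (1 + ε * sgn (x i)) - 1 - ε * ∑ i, sgn (x i))| ≤ 2 ^ n * (n * ε ^ 2) := by
  apply abs_le_of_sq_le_sq _ (by positivity)
  refine (Finset.sum_mul_sq_le_sq_mul_sq _ _ _).trans ?_
  rw [sum_Q_sq]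
  have h1 : ∑ x, f x ^ 2 ≤ 2 ^ n := by
    calc ∑ x, f x ^ 2 ≤ ∑ x : Fin n → Bool, (1 : ℝ) := by
          apply Finset.sum_le_sum
          intro x _
          have := hf x
          nlinarith [this.1, this.2]
      _ = 2 ^ n := by simp
  have h2 := key_num ε h
  calc (∑ x, f x ^ 2) * (2 ^ n * ((1 + ε ^ 2) ^ n - 1 - n * ε ^ 2))
      ≤ (∑ x, f x ^ 2) * (2 ^ n * (n * ε ^ 2) ^ 2) := by
        gcongr
    _ ≤ 2 ^ n * (2 ^ n * (n * ε ^ 2) ^ 2) := by gcongr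
    _ = _ := by ring

lemma biasedExp_eq {n : ℕ} (f : (Fin n → Bool) → ℝ) (ε : ℝ) :
    biasedExp f ε = (2 ^ n : ℝ)⁻¹ * ∑ x, f x * ∏ i, (1 + ε * sgn (x i)) := by
  unfold biasedExp
  rw [Finset.mul_sum]
  apply Finset.sum_congr rfl
  intro x _
  rw [Finset.prod_div_distrib]
  simp
  ring

lemma main_eq {n : ℕ} (f : (Fin n → Bool) → ℝ) (ε : ℝ) :
    biasedExp f ε - biasedExp f 0 - ε * ∑ i, walshCoeff f {i} = (2 ^ n : ℝ)⁻¹ *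
      ∑ x, f x * (∏ i, (1 + ε * sgn (x i)) - 1 - ε * ∑ i, sgn (x i)) := by
  have h : ∑ i, walshCoeff f {i} = (2 ^ n : ℝ)⁻¹ * ∑ x, f x * ∑ i, sgn (x i) := by
    simp only [walshCoeff, Finset.prod_singleton, ← Finset.mul_sum]
    rw [Finset.sum_comm]
    simp only [Finset.mul_sum]
  rw [h, biasedExp_eq, biasedExp_eq]
  have h2 : ∀ x, f x * (∏ i, (1 + ε * sgn (x i)) - 1 - ε * ∑ i, sgn (x i))
      = f x * ∏ i, (1 + ε * sgn (x i)) - f x - ε * (f x * ∑ i, sgn (x i)) := by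
    intro x; ring
  simp_rw [h2]
  simp only [Finset.sum_sub_distrib, ← Finset.mul_sum, zero_mul, add_zero, Finset.prod_const_one,
    mul_one]
  ring

/-- if f : {-1,1}^n → [-1,1] has f̂({i}) ≥ 0 for all i, then for
every nonzero |ε| ≤ 1/√n,
∑_i |f̂({i})| ≤ |(1/ε)(E_ε[f] − E_0[f])| + |ε|·n. -/
theorem level_one_le_coin_advantage (n : ℕ) (hn : 0 < n) (f : (Fin n → Bool) → ℝ)
    (hf : ∀ x, f x ∈ Set.Icc (-1 : ℝ) 1)
    (hpos : ∀ i : Fin n, 0 ≤ walshCoeff f {i})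
    (ε : ℝ) (hε0 : ε ≠ 0) (hε : |ε| ≤ 1 / Real.sqrt n) :
    ∑ i : Fin n, |walshCoeff f {i}| ≤
      |(1 / ε) * (biasedExp f ε - biasedExp f 0)| + |ε| * n := by
  have hn' : (0 : ℝ) < n := by exact_mod_cast hn
  have ht : n * ε ^ 2 ≤ 1 := by
    have h1 : |ε| * Real.sqrt n ≤ 1 := by
      rwa [le_div_iff₀ (Real.sqrt_pos.mpr hn')] at hε
    have h2 : (|ε| * Real.sqrt n) ^ 2 ≤ 1 := pow_le_one₀ (by positivity) h1
    rw [mul_pow, sq_abs, Real.sq_sqrt hn'.le] at h2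
    linarith
  have hb := remainder_bound f hf ε ht
  have hE := main_eq f ε
  have hb2 : |biasedExp f ε - biasedExp f 0 - ε * ∑ i, walshCoeff f {i}| ≤ n * ε ^ 2 := by
    rw [hE, abs_mul, abs_of_pos (by positivity), inv_mul_le_iff₀ (by positivity)]
    exact hb
  have hs : ∑ i : Fin n, |walshCoeff f {i}| = ∑ i, walshCoeff f {i} :=
    Finset.sum_congr rfl (fun i _ => abs_of_nonneg (hpos i))
  rw [hs]
  set W := ∑ i, walshCoeff f {i}
  set D := biasedExp f ε - biasedExp f 0
  have hW : W = (1 / ε) * D - (1 / ε) * (D - ε * W) := by field_simp; ring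
  have hr : |(1 / ε) * (D - ε * W)| ≤ |ε| * n := by
    rw [abs_mul, abs_div, abs_one, one_div, inv_mul_le_iff₀ (abs_pos.mpr hε0)]
    calc _ ≤ n * ε ^ 2 := hb2
      _ = |ε| * (|ε| * n) := by rw [← sq_abs]; ring
  have h3 := le_abs_self ((1 / ε) * D)
  have h4 := neg_abs_le ((1 / ε) * (D - ε * W))
  linarith
end

section
/- Let n be a positive integer, 0 ≤ t ≤ √n, and f : {-1,1}^n → [-1,1] with |∑_{i=1}^n f̂({i})| ≤ t. Then for every ε with |ε| ≤ t/n, we have |E_ε[f] − E_0[f]| ≤ 2t · |ε|. -/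
open Finset

lemma aux_sum_cons (n : ℕ) (F : (Fin (n+1) → Bool) → ℝ) :
    ∑ x, F x = ∑ x : Fin n → Bool, (F (Fin.cons true x) + F (Fin.cons false x)) := by
  rw [← (Fin.consEquiv (fun _ : Fin (n+1) => Bool)).sum_comp, Fintype.sum_prod_type,
    Fintype.sum_bool, Finset.sum_add_distrib]
  rfl

lemma aux_S (n : ℕ) : ∑ x : Fin n → Bool, ∑ i, sgn (x i) = 0 := by
  induction n with
  | zero => simp
  | succ n ih =>
    rw [aux_sum_cons]
    simp only [Fin.sum_univ_succ, Fin.cons_zero, Fin.cons_succ]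
    have : ∀ u : ℝ, (sgn true + u) + (sgn false + u) = 2 * u := by
      intro u; simp [sgn]; ring
    simp only [this, ← Finset.mul_sum, ih, mul_zero]

lemma aux_S2 (n : ℕ) : ∑ x : Fin n → Bool, (∑ i, sgn (x i)) ^ 2 = 2 ^ n * n := by
  induction n with
  | zero => simp
  | succ n ih =>
    rw [aux_sum_cons]
    simp only [Fin.sum_univ_succ, Fin.cons_zero, Fin.cons_succ]
    have : ∀ u : ℝ, (sgn true + u) ^ 2 + (sgn false + u) ^ 2 = 2 * u ^ 2 + 2 := by
      intro u; simp [sgn]; ring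
    simp only [this, Finset.sum_add_distrib, ← Finset.mul_sum, ih]
    simp
    ring

lemma aux_P (n : ℕ) (e : ℝ) : ∑ x : Fin n → Bool, ∏ i, (1 + e * sgn (x i)) = 2 ^ n := by
  induction n with
  | zero => simp
  | succ n ih =>
    rw [aux_sum_cons]
    simp only [Fin.prod_univ_succ, Fin.cons_zero, Fin.cons_succ]
    have : ∀ u : ℝ, (1 + e * sgn true) * u + (1 + e * sgn false) * u = 2 * u := by
      intro u; simp [sgn]; ring
    simp only [this, ← Finset.mul_sum, ih]
    ring

lemma aux_P2 (n : ℕ) (e : ℝ) :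
    ∑ x : Fin n → Bool, (∏ i, (1 + e * sgn (x i))) ^ 2 = 2 ^ n * (1 + e ^ 2) ^ n := by
  induction n with
  | zero => simp
  | succ n ih =>
    rw [aux_sum_cons]
    simp only [Fin.prod_univ_succ, Fin.cons_zero, Fin.cons_succ]
    have : ∀ u : ℝ, ((1 + e * sgn true) * u) ^ 2 + ((1 + e * sgn false) * u) ^ 2
        = 2 * (1 + e ^ 2) * u ^ 2 := by
      intro u; simp [sgn]; ring
    simp only [this, ← Finset.mul_sum, ih]
    ring

lemma aux_PS (n : ℕ) (e : ℝ) :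
    ∑ x : Fin n → Bool, (∏ i, (1 + e * sgn (x i))) * (∑ i, sgn (x i)) = 2 ^ n * (n * e) := by
  induction n with
  | zero => simp
  | succ n ih =>
    rw [aux_sum_cons]
    simp only [Fin.prod_univ_succ, Fin.sum_univ_succ, Fin.cons_zero, Fin.cons_succ]
    have : ∀ u v : ℝ, ((1 + e * sgn true) * u) * (sgn true + v) +
        ((1 + e * sgn false) * u) * (sgn false + v)
        = 2 * (u * v) + 2 * e * u := by
      intro u v; simp [sgn]; ring
    simp only [this, Finset.sum_add_distrib, ← Finset.mul_sum, ih, aux_P]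
    push_cast
    ring

lemma aux_var (n : ℕ) (e : ℝ) :
    ∑ x : Fin n → Bool, (∏ i, (1 + e * sgn (x i)) - 1 - e * ∑ i, sgn (x i)) ^ 2
      = 2 ^ n * ((1 + e ^ 2) ^ n - 1 - n * e ^ 2) := by
  have : ∀ u v : ℝ, (u - 1 - e * v) ^ 2 =
      u ^ 2 + 1 + e ^ 2 * v ^ 2 + (-2) * u + (-2 * e) * (u * v) + 2 * e * v := by
    intro u v; ring
  simp only [this, Finset.sum_add_distrib, ← Finset.mul_sum, aux_P, aux_P2, aux_PS, aux_S, aux_S2]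
  simp
  ring

/-- if 0 ≤ t ≤ √n and f : {-1,1}^n → [-1,1] has |∑_i f̂({i})| ≤ t,
then for all |ε| ≤ t/n, |E_ε[f] − E_0[f]| ≤ 2t·|ε|. -/
theorem coin_theorem_of_fourier_sum (n : ℕ) (hn : 0 < n) (t : ℝ) (ht0 : 0 ≤ t)
    (ht : t ≤ Real.sqrt n)
    (f : (Fin n → Bool) → ℝ) (hf : ∀ x, f x ∈ Set.Icc (-1 : ℝ) 1)
    (hsum : |∑ i : Fin n, walshCoeff f {i}| ≤ t)
    (ε : ℝ) (hε : |ε| ≤ t / n) :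
    |biasedExp f ε - biasedExp f 0| ≤ 2 * t * |ε| := by
  have hn' : (0:ℝ) < n := by exact_mod_cast hn
  have h1 : n * |ε| ≤ t := by
    rw [le_div_iff₀ hn'] at hε; linarith
  have ha := abs_nonneg ε
  have hxt : n * ε ^ 2 ≤ t * |ε| := by
    rw [← sq_abs]; nlinarith
  have ht2 : t ^ 2 ≤ n := by
    have := Real.sq_sqrt hn'.le
    have := pow_le_pow_left₀ ht0 ht 2
    linarith
  have hx1 : n * ε ^ 2 ≤ 1 := by
    have h2 : (n * |ε|) ^ 2 ≤ t ^ 2 := pow_le_pow_left₀ (by positivity) h1 2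
    rw [mul_pow, sq_abs] at h2
    have : (n:ℝ) * (n * ε ^ 2) ≤ n * 1 := by nlinarith
    exact le_of_mul_le_mul_left this hn'
  have hx0 : 0 ≤ n * ε ^ 2 := by positivity
  have hexp : (1 + ε ^ 2) ^ n - 1 - n * ε ^ 2 ≤ (n * ε ^ 2) ^ 2 := by
    have e1 := Real.abs_exp_sub_one_sub_id_le (x := n * ε ^ 2) (by rwa [abs_of_nonneg hx0])
    have e2 : (1 + ε ^ 2) ^ n ≤ Real.exp (n * ε ^ 2) := by
      rw [Real.exp_nat_mul]
      exact pow_le_pow_left₀ (by positivity) (by linarith [Real.add_one_le_exp (ε ^ 2)]) n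
    linarith [le_abs_self (Real.exp (n * ε ^ 2) - 1 - n * ε ^ 2)]
  set Q : (Fin n → Bool) → ℝ := fun x => ∏ i, (1 + ε * sgn (x i)) - 1 - ε * ∑ i, sgn (x i) with hQ
  have hdec : biasedExp f ε - biasedExp f 0 =
      (2 ^ n : ℝ)⁻¹ * ∑ x, f x * Q x + ε * ∑ i : Fin n, walshCoeff f {i} := by
    simp only [biasedExp, walshCoeff, hQ, Finset.prod_singleton, ← Finset.mul_sum]
    rw [Finset.sum_comm]
    simp only [← Finset.mul_sum, Finset.prod_div_distrib]
    rw [← Finset.sum_sub_distrib, mul_left_comm, ← mul_add, Finset.mul_sum univ _ ε,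
      ← Finset.sum_add_distrib, Finset.mul_sum]
    refine Finset.sum_congr rfl fun x _ => ?_
    simp
    ring
  have hN : (0:ℝ) < 2 ^ n := by positivity
  have hCS : (∑ x, f x * Q x) ^ 2 ≤ (2 ^ n * (n * ε ^ 2)) ^ 2 := by
    have c := Finset.sum_mul_sq_le_sq_mul_sq univ f Q
    have cf : ∑ x, f x ^ 2 ≤ 2 ^ n := by
      calc ∑ x, f x ^ 2 ≤ ∑ x : Fin n → Bool, (1:ℝ) := by
            refine Finset.sum_le_sum fun x _ => ?_
            obtain ⟨a, b⟩ := hf x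
            nlinarith
        _ = 2 ^ n := by simp
    have cq : ∑ x, Q x ^ 2 ≤ 2 ^ n * (n * ε ^ 2) ^ 2 := by
      rw [aux_var]; gcongr
    calc _ ≤ _ := c
      _ ≤ 2 ^ n * (2 ^ n * (n * ε ^ 2) ^ 2) := by
        apply mul_le_mul cf cq (Finset.sum_nonneg fun x _ => sq_nonneg _) hN.le
      _ = _ := by ring
  have hT : |(2 ^ n : ℝ)⁻¹ * ∑ x, f x * Q x| ≤ n * ε ^ 2 := by
    rw [abs_mul, abs_of_pos (inv_pos.2 hN), inv_mul_le_iff₀ hN]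
    exact abs_le_of_sq_le_sq hCS (by positivity)
  rw [hdec]
  calc _ ≤ _ := abs_add_le _ _
    _ ≤ t * |ε| + |ε| * t := by
      rw [abs_mul ε]
      exact add_le_add (hT.trans hxt) (by gcongr)
    _ = _ := by ring
end

section
/- Let n be a positive integer, B ≥ 0, 0 < ε₀ ≤ 1/√n, and let f : {-1,1}^n → [-1,1] satisfy |E_δ[f] − E_0[f]| ≤ |δ| · B for all δ ∈ [-1,1] with |δ| ≥ ε₀. Then for all ε with |ε| < ε₀, we have |E_ε[f] − E_0[f]| ≤ |ε| · (B + n·(|ε| + ε₀)) ≤ |ε| · (B + 2n·ε₀). -/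
open Finset

lemma sum_cons_aux (n : ℕ) (F : (Fin (n+1) → Bool) → ℝ) :
    ∑ x, F x = ∑ y : Fin n → Bool, (F (Fin.cons true y) + F (Fin.cons false y)) := by
  rw [← (Fin.consEquiv (fun _ : Fin (n+1) => Bool)).sum_comp, Fintype.sum_prod_type]
  simp [Fin.consEquiv, Finset.sum_add_distrib]

lemma moments_aux (d : ℝ) (n : ℕ) :
    (∑ x : Fin n → Bool, (1:ℝ)) = 2 ^ n ∧
    (∑ x : Fin n → Bool, ∏ i, (1 + d * sgn (x i))) = 2 ^ n ∧
    (∑ x : Fin n → Bool, (∏ i, (1 + d * sgn (x i))) ^ 2) = 2 ^ n * (1 + d ^ 2) ^ n ∧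
    (∑ x : Fin n → Bool, ∑ i, sgn (x i)) = 0 ∧
    (∑ x : Fin n → Bool, (∑ i, sgn (x i)) ^ 2) = 2 ^ n * n ∧
    (∑ x : Fin n → Bool, (∏ i, (1 + d * sgn (x i))) * ∑ i, sgn (x i)) = 2 ^ n * (n * d) := by
  induction n with
  | zero => simp
  | succ n ih =>
    obtain ⟨h0, h1, h2, h3, h4, h5⟩ := ih
    have st : sgn true = 1 := by simp [sgn]
    have sf : sgn false = -1 := by simp [sgn]
    simp only [sum_cons_aux, Fin.prod_univ_succ, Fin.sum_univ_succ, Fin.cons_zero, Fin.cons_succ,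
      st, sf]
    generalize hP : (fun x : Fin n → Bool => ∏ i, (1 + d * sgn (x i))) = P at *
    generalize hL : (fun x : Fin n → Bool => ∑ i, sgn (x i)) = L at *
    have eP : ∀ x : Fin n → Bool, ∏ i, (1 + d * sgn (x i)) = P x := fun x => congrFun hP x
    have eL : ∀ x : Fin n → Bool, ∑ i, sgn (x i) = L x := fun x => congrFun hL x
    simp only [eP, eL] at *
    refine ⟨?_, ?_, ?_, ?_, ?_, ?_⟩
    · rw [Finset.sum_add_distrib, h0]; ring
    · rw [Finset.sum_congr rfl (g := fun x => 2 * P x) (fun x _ => by ring), ← Finset.mul_sum, h1]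
      ring
    · rw [Finset.sum_congr rfl (g := fun x => (2 * (1 + d ^ 2)) * P x ^ 2) (fun x _ => by ring),
        ← Finset.mul_sum, h2]
      ring
    · rw [Finset.sum_congr rfl (g := fun x => 2 * L x) (fun x _ => by ring), ← Finset.mul_sum, h3]
      ring
    · rw [Finset.sum_congr rfl (g := fun x => 2 * L x ^ 2 + 2 * 1) (fun x _ => by ring),
        Finset.sum_add_distrib, ← Finset.mul_sum, ← Finset.mul_sum, h4, h0]
      push_cast; ring
    · rw [Finset.sum_congr rfl (g := fun x => 2 * (P x * L x) + (2 * d) * P x) (fun x _ => by ring),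
        Finset.sum_add_distrib, ← Finset.mul_sum, ← Finset.mul_sum, h5, h1]
      push_cast; ring

lemma second_moment_aux (d : ℝ) (n : ℕ) :
    (∑ x : Fin n → Bool, ((∏ i, (1 + d * sgn (x i))) - 1 - d * ∑ i, sgn (x i)) ^ 2)
      = 2 ^ n * ((1 + d ^ 2) ^ n - 1 - n * d ^ 2) := by
  obtain ⟨h0, h1, h2, h3, h4, h5⟩ := moments_aux d n
  generalize hP : (fun x : Fin n → Bool => ∏ i, (1 + d * sgn (x i))) = P at *
  generalize hL : (fun x : Fin n → Bool => ∑ i, sgn (x i)) = L at *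
  have eP : ∀ x : Fin n → Bool, ∏ i, (1 + d * sgn (x i)) = P x := fun x => congrFun hP x
  have eL : ∀ x : Fin n → Bool, ∑ i, sgn (x i) = L x := fun x => congrFun hL x
  simp only [eP, eL] at *
  rw [Finset.sum_congr rfl (g := fun x => P x ^ 2 + 1 + d ^ 2 * L x ^ 2 + (-2) * P x
      + (-2 * d) * (P x * L x) + (2 * d) * L x) (fun x _ => by ring)]
  simp only [Finset.sum_add_distrib, ← Finset.mul_sum]
  rw [h0, h1, h2, h3, h4, h5]; ring

lemma remainder_aux (n : ℕ) (f : (Fin n → Bool) → ℝ) (hf : ∀ x, f x ∈ Set.Icc (-1 : ℝ) 1)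
    (d : ℝ) (hd : n * d ^ 2 ≤ 1) :
    |biasedExp f d - biasedExp f 0 - d * ((2 ^ n : ℝ)⁻¹ * ∑ x, f x * ∑ i, sgn (x i))|
      ≤ n * d ^ 2 := by
  have h2 : (0:ℝ) < 2 ^ n := by positivity
  have ht : (0:ℝ) ≤ n * d ^ 2 := by positivity
  have e : biasedExp f d - biasedExp f 0 - d * ((2 ^ n : ℝ)⁻¹ * ∑ x, f x * ∑ i, sgn (x i))
      = (2 ^ n : ℝ)⁻¹ * ∑ x, f x * ((∏ i, (1 + d * sgn (x i))) - 1 - d * ∑ i, sgn (x i)) := by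
    unfold biasedExp
    simp only [Finset.prod_div_distrib, Finset.prod_const, Finset.card_univ, Fintype.card_fin,
      zero_mul, add_zero, one_pow]
    have e1 : ∀ L : (Fin n → Bool) → ℝ, d * ((2 ^ n : ℝ)⁻¹ * ∑ x, f x * L x)
        = ∑ x, d * ((2 ^ n : ℝ)⁻¹ * (f x * L x)) := fun L => by
      rw [Finset.mul_sum, Finset.mul_sum]
    rw [e1 (fun x => ∑ i, sgn (x i)), ← Finset.sum_sub_distrib, ← Finset.sum_sub_distrib,
      Finset.mul_sum]
    exact Finset.sum_congr rfl fun x _ => by ring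
  rw [e]
  have cs := Finset.sum_mul_sq_le_sq_mul_sq Finset.univ f
    (fun x => (∏ i, (1 + d * sgn (x i))) - 1 - d * ∑ i, sgn (x i))
  rw [second_moment_aux] at cs
  have hf2 : ∑ x, f x ^ 2 ≤ 2 ^ n := by
    rw [← (moments_aux d n).1]
    refine Finset.sum_le_sum fun x _ => ?_
    have := hf x
    nlinarith [this.1, this.2]
  have hexp : (1 + d ^ 2) ^ n ≤ Real.exp (n * d ^ 2) := by
    rw [Real.exp_nat_mul]
    refine pow_le_pow_left₀ (by positivity) ?_ n
    linarith [Real.add_one_le_exp (d ^ 2)]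
  have hq := (abs_le.1 (Real.abs_exp_sub_one_sub_id_le (x := n * d ^ 2)
    (by rwa [abs_of_nonneg ht]))).2
  have hk : (1 + d ^ 2) ^ n - 1 - n * d ^ 2 ≤ (n * d ^ 2) ^ 2 := by linarith
  refine abs_le_of_sq_le_sq ?_ ht
  rw [mul_pow, inv_pow, inv_mul_le_iff₀ (by positivity)]
  refine cs.trans ?_
  calc _ ≤ (2 ^ n : ℝ) * (2 ^ n * ((1 + d ^ 2) ^ n - 1 - n * d ^ 2)) := by
        refine mul_le_mul_of_nonneg_right hf2 ?_
        rw [← second_moment_aux]; positivity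
    _ ≤ (2 ^ n : ℝ) * (2 ^ n * (n * d ^ 2) ^ 2) := by gcongr
    _ = _ := by ring

/-- if f : {-1,1}^n → [-1,1] satisfies a coin theorem
|E_δ[f] − E_0[f]| ≤ |δ|·B for all δ ∈ [-1,1] with |δ| ≥ ε₀ (0 < ε₀ ≤ 1/√n),
then for all |ε| < ε₀,
|E_ε[f] − E_0[f]| ≤ |ε|·(B + n·(|ε| + ε₀)) ≤ |ε|·(B + 2n·ε₀). -/
theorem coin_improvement_small_bias (n : ℕ) (hn : 0 < n) (B : ℝ) (hB : 0 ≤ B)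
    (ε₀ : ℝ) (hε₀pos : 0 < ε₀) (hε₀ : ε₀ ≤ 1 / Real.sqrt n)
    (f : (Fin n → Bool) → ℝ) (hf : ∀ x, f x ∈ Set.Icc (-1 : ℝ) 1)
    (hcoin : ∀ δ ∈ Set.Icc (-1 : ℝ) 1, ε₀ ≤ |δ| →
      |biasedExp f δ - biasedExp f 0| ≤ |δ| * B)
    (ε : ℝ) (hε : |ε| < ε₀) :
    |biasedExp f ε - biasedExp f 0| ≤ |ε| * (B + n * (|ε| + ε₀)) ∧
      |ε| * (B + n * (|ε| + ε₀)) ≤ |ε| * (B + 2 * n * ε₀) := by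
  have hn1 : (1:ℝ) ≤ n := by exact_mod_cast hn
  have hs : 0 < Real.sqrt n := Real.sqrt_pos.2 (by linarith)
  have hsq : Real.sqrt n ^ 2 = n := Real.sq_sqrt (by linarith)
  have h1 : ε₀ * Real.sqrt n ≤ 1 := (le_div_iff₀ hs).1 hε₀
  have hd0 : n * ε₀ ^ 2 ≤ 1 := by
    have : 0 ≤ ε₀ * Real.sqrt n := by positivity
    rw [← hsq]; nlinarith
  have hle : ε₀ ≤ 1 := by nlinarith
  have ha : 0 ≤ |ε| := abs_nonneg ε
  have hee : |ε| ^ 2 ≤ ε₀ ^ 2 := by gcongr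
  have hd : n * ε ^ 2 ≤ 1 := by
    rw [← sq_abs]; nlinarith
  have r0 := remainder_aux n f hf ε₀ hd0
  have r := remainder_aux n f hf ε hd
  generalize (2 ^ n : ℝ)⁻¹ * ∑ x, f x * ∑ i, sgn (x i) = a at r r0
  have hc := hcoin ε₀ ⟨by linarith, hle⟩ (le_abs_self _)
  rw [abs_of_pos hε₀pos] at hc
  have hA : |a| ≤ B + n * ε₀ := by
    have h3 : ε₀ * |a| ≤ ε₀ * (B + n * ε₀) := by
      rw [← abs_of_pos hε₀pos, ← abs_mul, abs_of_pos hε₀pos]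
      rw [abs_le] at *
      constructor <;> nlinarith [r0.1, r0.2, hc.1, hc.2]
    exact le_of_mul_le_mul_left h3 hε₀pos
  constructor
  · have h4 : |ε * a| ≤ |ε| * (B + n * ε₀) := by rw [abs_mul]; gcongr
    have h5 := abs_add_le (biasedExp f ε - biasedExp f 0 - ε * a) (ε * a)
    rw [sub_add_cancel] at h5
    rw [← sq_abs ε] at r
    nlinarith
  · refine mul_le_mul_of_nonneg_left ?_ ha
    nlinarith
end
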